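/- If P ∈ 𝒫(Z) is a global maximizer of Q ↦ B(Q,ℰ) over 𝒫(Z), then |supp(P)| ≤ dim ℰ + 1, where dim ℰ denotes the dimension of the affine hull of {f(z) : z ∈ Z} in ℝ^d. -/

import Mathlib

/-!
Let `P` be a maximizer and let `v` be a signed measure supported on `supp P` with total mass zero
and zero `f`-moment. Since `β_z'(P_θ(z))` is an affine function of `f(z)`, moving from `P` to
`P + t v` changes every divergence `B(·, P_θ)`, hence also their infimum, by the change of
`Q ↦ ∑ z, β_z (Q z)`. This function is strictly convex on the nonnegative orthant, so it has no
local maximum along a line through `P` that stays in the orthant on both sides of `P`; therefore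
`v = 0`. Thus `f` is affinely independent on `supp P`.
-/

open Filter Set Topology

theorem strictConvexOn_Ici_of_strictConvexOn_Ioi {φ : ℝ → ℝ} {c : ℝ}
    (hcont : ContinuousOn φ (Ici c)) (hconv : StrictConvexOn ℝ (Ioi c) φ)
    (hdiff : ∀ x ∈ Ioi c, DifferentiableAt ℝ φ x) : StrictConvexOn ℝ (Ici c) φ := by
  refine StrictMonoOn.strictConvexOn_of_deriv (convex_Ici c) hcont ?_
  rw [interior_Ici]
  exact hconv.strictMonoOn_deriv hdiff

theorem add_mul_sub_le_of_convexOn_of_hasDerivAt {s : Set ℝ} {φ : ℝ → ℝ} {φ' x y : ℝ}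
    (hφ : ConvexOn ℝ s φ) (hx : x ∈ s) (hy : y ∈ s) (hφ' : HasDerivAt φ φ' y) :
    φ y + φ' * (x - y) ≤ φ x := by
  rcases lt_trichotomy x y with hxy | rfl | hyx
  · have hslope := hφ.slope_le_of_hasDerivAt hx hy hxy hφ'
    rw [slope_def_field, div_le_iff₀ (sub_pos.2 hxy)] at hslope
    linarith
  · simp
  · have hslope := hφ.le_slope_of_hasDerivAt hy hx hyx hφ'
    rw [slope_def_field, le_div_iff₀ (sub_pos.2 hyx)] at hslope
    linarith

theorem strictConvexOn_pi_sum {ι : Type*} [Fintype ι] {E : ι → Type*} [∀ i, AddCommGroup (E i)]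
    [∀ i, Module ℝ (E i)] {s : ∀ i, Set (E i)} {φ : ∀ i, E i → ℝ}
    (hφ : ∀ i, StrictConvexOn ℝ (s i) (φ i)) :
    StrictConvexOn ℝ (univ.pi s) fun x ↦ ∑ i, φ i (x i) := by
  refine ⟨convex_pi fun i _ ↦ (hφ i).1, fun x hx y hy hxy a b ha hb hab ↦ ?_⟩
  obtain ⟨j, hj⟩ := Function.ne_iff.1 hxy
  simp only [Finset.smul_sum, ← Finset.sum_add_distrib]
  exact Finset.sum_lt_sum
    (fun i _ ↦ (hφ i).convexOn.2 (hx i trivial) (hy i trivial) ha.le hb.le hab)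
    ⟨j, Finset.mem_univ j, (hφ j).2 (hx j trivial) (hy j trivial) hj ha hb hab⟩

theorem eq_zero_of_isLocalMax_add_smul {E : Type*} [AddCommGroup E] [Module ℝ E] {s : Set E}
    {φ : E → ℝ} {x v : E} (hφ : StrictConvexOn ℝ s φ)
    (hs : ∀ᶠ t in 𝓝 (0 : ℝ), x + t • v ∈ s)
    (hmax : IsLocalMax (fun t : ℝ ↦ φ (x + t • v)) 0) : v = 0 := by
  by_contra hv
  have hright : ∀ᶠ t in 𝓝 (0 : ℝ), x + t • v ∈ s ∧ φ (x + t • v) ≤ φ x :=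
    hs.and (by simpa [IsLocalMax, IsMaxFilter] using hmax)
  have hleft : ∀ᶠ t in 𝓝 (0 : ℝ), x + (-t) • v ∈ s ∧ φ (x + (-t) • v) ≤ φ x :=
    (continuous_neg.tendsto' (0 : ℝ) 0 neg_zero).eventually hright
  obtain ⟨t, ⟨⟨hrs, hrφ⟩, hls, hlφ⟩, ht⟩ :=
    (((hright.and hleft).filter_mono nhdsWithin_le_nhds).and
      (self_mem_nhdsWithin (a := (0 : ℝ)) (s := Ioi 0))).exists
  have hne : x + t • v ≠ x + (-t) • v := fun h ↦
    ht.ne' (self_eq_neg.1 (smul_left_injective ℝ hv (add_left_cancel h)))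
  have hmid : (1 / 2 : ℝ) • (x + t • v) + (1 / 2 : ℝ) • (x + (-t) • v) = x := by module
  have hlt := hφ.2 hrs hls hne one_half_pos one_half_pos (add_halves 1)
  rw [hmid, smul_eq_mul, smul_eq_mul] at hlt
  linarith

theorem affineIndependent_subtype_of_forall_eq_zero {k V ι : Type*} [Ring k] [AddCommGroup V]
    [Module k V] [Fintype ι] {p : ι → Prop} {f : ι → V}
    (h : ∀ v : ι → k, (∀ i, v i ≠ 0 → p i) → ∑ i, v i = 0 → ∑ i, v i • f i = 0 → v = 0) :
    AffineIndependent k fun i : Subtype p ↦ f i := by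
  classical
  refine (affineIndependent_iff_of_fintype k _).2 fun w hw hwf i ↦ ?_
  rw [Finset.weightedVSub_eq_linear_combination _ hw] at hwf
  let v : ι → k := Function.extend Subtype.val w 0
  have hv (i : Subtype p) : v i = w i := Subtype.val_injective.extend_apply w 0 i
  have hv_zero : ∀ i ∉ range (Subtype.val : Subtype p → ι), v i = 0 := fun i hi ↦
    Function.extend_apply' _ _ i hi
  have hv_supp : ∀ i, v i ≠ 0 → p i := fun i hi ↦ by
    by_contra hpi
    exact hi (hv_zero i (by simpa using hpi))
  have hv_sum : ∑ i, v i = 0 := by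
    rw [← hw]
    exact (Fintype.sum_of_injective _ Subtype.val_injective w v hv_zero fun i ↦ (hv i).symm).symm
  have hv_smul : ∑ i, v i • f i = 0 := by
    rw [← hwf]
    exact (Fintype.sum_of_injective _ Subtype.val_injective _ _
      (fun i hi ↦ by rw [hv_zero i hi, zero_smul]) fun i ↦ by rw [hv]).symm
  rw [← hv i, h v hv_supp hv_sum hv_smul, Pi.zero_apply]

theorem ncard_le_finrank_direction_affineSpan_add_one {k V A ι : Type*} [DivisionRing k]
    [AddCommGroup V] [Module k V] [AddTorsor V A] [Finite ι] {p : ι → Prop} {f : ι → A}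
    (hf : AffineIndependent k fun i : Subtype p ↦ f i) :
    {i | p i}.ncard ≤ Module.finrank k (affineSpan k (range f)).direction + 1 := by
  have := Fintype.ofFinite (Subtype p)
  have hsub : vectorSpan k (range fun i : Subtype p ↦ f i) ≤ vectorSpan k (range f) :=
    vectorSpan_mono k (range_comp_subset_range Subtype.val f)
  calc {i | p i}.ncard = Fintype.card (Subtype p) := by
        rw [← Nat.card_eq_fintype_card, ← Nat.card_coe_set_eq]; rfl
    _ ≤ Module.finrank k (vectorSpan k (range fun i : Subtype p ↦ f i)) + 1 :=
        hf.card_le_finrank_succ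
    _ ≤ Module.finrank k (affineSpan k (range f)).direction + 1 := by
        rw [direction_affineSpan]
        gcongr
        exact Submodule.finrank_mono hsub

theorem eventually_add_smul_mem_stdSimplex {Z : Type*} [Fintype Z] {P v : Z → ℝ}
    (hP : P ∈ stdSimplex ℝ Z) (hv_supp : ∀ z, v z ≠ 0 → 0 < P z) (hv_sum : ∑ z, v z = 0) :
    ∀ᶠ t in 𝓝 (0 : ℝ), P + t • v ∈ stdSimplex ℝ Z := by
  have hnonneg : ∀ z, ∀ᶠ t in 𝓝 (0 : ℝ), 0 ≤ P z + t * v z := fun z ↦ by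
    by_cases hvz : v z = 0
    · simp [hvz, hP.1 z]
    · have hcont : ContinuousAt (fun t ↦ P z + t * v z) 0 := by fun_prop
      exact (hcont.eventually_const_lt (by simpa using hv_supp z hvz)).mono fun _ ↦ le_of_lt
  filter_upwards [eventually_all.2 hnonneg] with t ht
  refine ⟨ht, ?_⟩
  simp [Finset.sum_add_distrib, ← Finset.mul_sum, hv_sum, hP.2]

section Bregman

variable {Z : Type*} [Fintype Z]

/-- The separable Bregman divergence `B(P, Q)` generated by the functions `β z`, whose derivatives
`β' z` are supplied separately. -/
def bregmanDiv (β β' : Z → ℝ → ℝ) (P Q : Z → ℝ) : ℝ :=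
  ∑ z, (β z (P z) - β z (Q z) - β' z (Q z) * (P z - Q z))

/-- The Bregman divergence `B(P, {R i})` of `P` from a family of reference measures. The infimum
takes its junk value `0` if the divergences are unbounded below or the family is empty. -/
noncomputable def bregmanInfDiv {ι : Type*} (β β' : Z → ℝ → ℝ) (R : ι → Z → ℝ) (P : Z → ℝ) : ℝ :=
  ⨅ i, bregmanDiv β β' P (R i)

variable {β β' : Z → ℝ → ℝ}

theorem bregmanDiv_nonneg (hβ : ∀ z, ConvexOn ℝ (Ici 0) (β z))
    (hβ' : ∀ z x, 0 < x → HasDerivAt (β z) (β' z x) x) {P Q : Z → ℝ} (hP : ∀ z, 0 ≤ P z)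
    (hQ : ∀ z, 0 < Q z) : 0 ≤ bregmanDiv β β' P Q :=
  Finset.sum_nonneg fun z _ ↦ by
    linarith [add_mul_sub_le_of_convexOn_of_hasDerivAt (hβ z) (hP z) (hQ z).le
      (hβ' z (Q z) (hQ z))]

theorem bregmanDiv_add_left {P Q v : Z → ℝ} (hv : ∑ z, β' z (Q z) * v z = 0) :
    bregmanDiv β β' (P + v) Q =
      bregmanDiv β β' P Q + (∑ z, β z ((P + v) z) - ∑ z, β z (P z)) := by
  simp only [bregmanDiv, Finset.sum_sub_distrib, Pi.add_apply, mul_sub, mul_add,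
    Finset.sum_add_distrib, hv]
  ring

variable {ι V : Type*} [AddCommGroup V] [Module ℝ V]
  {f : Z → V} {L : ι → Module.Dual ℝ V} {c : ι → ℝ} {R : ι → Z → ℝ}

theorem bregmanInfDiv_add [Nonempty ι] {P v : Z → ℝ}
    (hbdd : BddBelow (range fun i ↦ bregmanDiv β β' P (R i)))
    (hv : ∀ i, ∑ z, β' z (R i z) * v z = 0) :
    bregmanInfDiv β β' R (P + v) =
      bregmanInfDiv β β' R P + (∑ z, β z ((P + v) z) - ∑ z, β z (P z)) := by
  simp only [bregmanInfDiv, bregmanDiv_add_left (hv _)]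
  exact (ciInf_add hbdd _).symm

theorem sum_dual_sub_const_mul_eq_zero {v : Z → ℝ} (hv_sum : ∑ z, v z = 0)
    (hv_smul : ∑ z, v z • f z = 0) (ℓ : Module.Dual ℝ V) (r : ℝ) :
    ∑ z, (ℓ (f z) - r) * v z = 0 := by
  have hℓ : ∑ z, ℓ (f z) * v z = ℓ (∑ z, v z • f z) := by simp [mul_comm]
  simp only [sub_mul, Finset.sum_sub_distrib, ← Finset.mul_sum, hℓ, hv_smul, hv_sum, map_zero,
    mul_zero, sub_zero]

theorem isLocalMax_sum_add_smul_of_isLocalMaxOn_bregmanInfDiv [Nonempty ι] {P v : Z → ℝ}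
    (hbdd : BddBelow (range fun i ↦ bregmanDiv β β' P (R i)))
    (hv : ∀ i, ∑ z, β' z (R i z) * v z = 0)
    {s : Set (Z → ℝ)} (hs : ∀ᶠ t in 𝓝 (0 : ℝ), P + t • v ∈ s)
    (hmax : IsLocalMaxOn (bregmanInfDiv β β' R) s P) :
    IsLocalMax (fun t : ℝ ↦ ∑ z, β z ((P + t • v) z)) 0 := by
  have hline : Tendsto (fun t : ℝ ↦ P + t • v) (𝓝 0) (𝓝[s] P) :=
    tendsto_nhdsWithin_iff.2 ⟨Continuous.tendsto' (by fun_prop) _ _ (by simp), hs⟩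
  filter_upwards [hline.eventually hmax] with t ht
  have htv (i : ι) : ∑ z, β' z (R i z) * (t • v) z = 0 := by
    simp [mul_left_comm _ t, ← Finset.mul_sum, hv i]
  rw [bregmanInfDiv_add hbdd htv] at ht
  simp only [zero_smul, add_zero]
  linarith

theorem affineIndependent_support_of_isLocalMaxOn_bregmanInfDiv [Nonempty ι]
    (hβ : ∀ z, StrictConvexOn ℝ (Ici 0) (β z))
    (hβ' : ∀ z x, 0 < x → HasDerivAt (β z) (β' z x) x) (hR_pos : ∀ i z, 0 < R i z)
    (hR : ∀ i z, β' z (R i z) = L i (f z) - c i) {P : Z → ℝ} (hP : P ∈ stdSimplex ℝ Z)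
    (hmax : IsLocalMaxOn (bregmanInfDiv β β' R) (stdSimplex ℝ Z) P) :
    AffineIndependent ℝ fun z : {z // 0 < P z} ↦ f z := by
  refine affineIndependent_subtype_of_forall_eq_zero fun v hv_supp hv_sum hv_smul ↦ ?_
  have hbdd : BddBelow (range fun i ↦ bregmanDiv β β' P (R i)) :=
    ⟨0, forall_mem_range.2 fun i ↦
      bregmanDiv_nonneg (fun z ↦ (hβ z).convexOn) hβ' hP.1 (hR_pos i)⟩
  have hv (i : ι) : ∑ z, β' z (R i z) * v z = 0 := by
    simpa only [hR] using sum_dual_sub_const_mul_eq_zero hv_sum hv_smul (L i) (c i)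
  have hmem := eventually_add_smul_mem_stdSimplex hP hv_supp hv_sum
  exact eq_zero_of_isLocalMax_add_smul (strictConvexOn_pi_sum hβ)
    (hmem.mono fun t ht z _ ↦ ht.1 z)
    (isLocalMax_sum_add_smul_of_isLocalMaxOn_bregmanInfDiv hbdd hv hmem hmax)

end Bregman

theorem stmt_12_general {Z ι V : Type*} [Fintype Z] [Nonempty ι] [AddCommGroup V] [Module ℝ V]
    {β β' : Z → ℝ → ℝ} (hβ : ∀ z, StrictConvexOn ℝ (Ici 0) (β z))
    (hβ' : ∀ z x, 0 < x → HasDerivAt (β z) (β' z x) x)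
    {f : Z → V} {L : ι → Module.Dual ℝ V} {c : ι → ℝ} {R : ι → Z → ℝ}
    (hR_pos : ∀ i z, 0 < R i z) (hR : ∀ i z, β' z (R i z) = L i (f z) - c i)
    {P : Z → ℝ} (hP : P ∈ stdSimplex ℝ Z)
    (hmax : IsLocalMaxOn (bregmanInfDiv β β' R) (stdSimplex ℝ Z) P) :
    {z | 0 < P z}.ncard ≤ Module.finrank ℝ (affineSpan ℝ (range f)).direction + 1 :=
  ncard_le_finrank_direction_affineSpan_add_one
    (affineIndependent_support_of_isLocalMaxOn_bregmanInfDiv hβ hβ' hR_pos hR hP hmax)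

theorem stmt_12 {Z : Type} [Fintype Z] [Nonempty Z] {d : ℕ}
    (β β' : Z → ℝ → ℝ)
    (hβc : ∀ z, ContinuousOn (β z) (Set.Ici 0))
    (hβsc : ∀ z, StrictConvexOn ℝ (Set.Ioi 0) (β z))
    (hβd : ∀ z x, 0 < x → HasDerivAt (β z) (β' z x) x)
    (hβ'bot : ∀ z, Filter.Tendsto (β' z) (nhdsWithin 0 (Set.Ioi 0)) Filter.atBot)
    (hβ'top : ∀ z, Filter.Tendsto (β' z) Filter.atTop Filter.atTop)
    (e : Z → ℝ → ℝ)
    (he_pos : ∀ z r, 0 < e z r)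
    (he_left : ∀ z r, β' z (e z r) = r)
    (he_right : ∀ z x, 0 < x → e z (β' z x) = x)
    (f : Z → Fin d → ℝ)
    (prob : Set (Z → ℝ))
    (hprob : prob = {P : Z → ℝ | (∀ z, 0 ≤ P z) ∧ (∑ z, P z) = 1})
    (μ : (Z → ℝ) → Fin d → ℝ)
    (hμ : ∀ P i, μ P i = ∑ z, P z * f z i)
    (Λ : (Fin d → ℝ) → ℝ)
    (hΛ : ∀ θ, (∑ z, e z ((∑ i, θ i * f z i) - Λ θ)) = 1)
    (Pθ : (Fin d → ℝ) → Z → ℝ)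
    (hPθ : ∀ θ z, Pθ θ z = e z ((∑ i, θ i * f z i) - Λ θ))
    (Bdiv : (Z → ℝ) → (Z → ℝ) → ℝ)
    (hBdiv : ∀ P Q, Bdiv P Q = ∑ z, (β z (P z) - β z (Q z) - β' z (Q z) * (P z - Q z)))
    (BE : (Z → ℝ) → ℝ)
    (hBE : ∀ P, BE P = ⨅ θ, Bdiv P (Pθ θ))
    (P : Z → ℝ) (hP : P ∈ prob)
    (hmax : ∀ Q ∈ prob, BE Q ≤ BE P) :
    {z : Z | 0 < P z}.ncard ≤ Module.finrank ℝ (affineSpan ℝ (Set.range f)).direction + 1 := by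
  obtain rfl : Bdiv = bregmanDiv β β' := funext₂ hBdiv
  obtain rfl : BE = bregmanInfDiv β β' Pθ := funext hBE
  subst hprob
  exact stmt_12_general (L := dotProductBilin ℝ ℝ) (c := Λ)
    (fun z ↦ strictConvexOn_Ici_of_strictConvexOn_Ioi (hβc z) (hβsc z)
      fun x hx ↦ (hβd z x hx).differentiableAt)
    hβd (fun θ z ↦ hPθ θ z ▸ he_pos z _) (fun θ z ↦ by rw [hPθ, he_left]; rfl) hP
    (IsMaxOn.localize hmax)
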